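/- arXiv:2301.05365 — 2 statements merged into one kernel-verified Lean document; each statement's English description precedes it below -/
import Mathlib

section
/- (Proposition 2: stationary MDP with restricted permutation set Π₄.) Take 𝒴 = 𝒞 and suppose the law of the data has probability mass function f(d) = μ(c₁) · ∏_{t=1}^{T−1} 1[y_t = c_{t+1}] · ∏_{t=1}^T a_t(x_t; c_t, h_{t−1}(d)) · P(y_t; c_t, x_t), where μ : 𝒞 → ℝ≥0 is the initial-state distribution and P : 𝒞 × 𝒞 × 𝒳 → ℝ≥0 is a time-homogeneous transition density (stationary MDP: the response y_t is the next state c_{t+1}). Assume the null hypothesis H₀^{⊥⊥,g}: for all y, c ∈ 𝒞 and all x, x' ∈ 𝒳 with g(x) = g(x'), P(y; c, x) = P(y; c, x'). Fix a trajectory d with y_t = c_{t+1} for all t ∈ {1, …, T−1}, and define Π₄ = {π a permutation of {1,…,T} : y_{π(t)} = c_{π(t+1)} for all t ∈ {1,…,T−1}, and c_{π(1)} = c₁}. Then for every π ∈ Π₄ and every trajectory d̃ with (c̃_t, g(x̃_t), ỹ_t) = (c_{π(t)}, g(x_{π(t)}), y_{π(t)}) for all t ∈ {1, …, T} (such d̃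 automatically satisfies ỹ_t = c̃_{t+1} for t < T), one has f(d̃) = K(d) · f̂(d̃), where K(d) = μ(c₁) · ∏_{t=1}^T P(y_t; c_t, x_t) depends only on d (not on π or d̃). -/
open scoped NNReal Classical BigOperators

noncomputable section

variable {C X G : Type*}

/-- Embedding of an index `s < t` into `Fin T`. -/
def emb {T : ℕ} (t : Fin T) (s : Fin (t : ℕ)) : Fin T :=
  ⟨(s : ℕ), lt_trans s.isLt t.isLt⟩

/-- The history `h_{t−1}(d)`: the prefix of the trajectory strictly before time `t`. -/
def hist {T : ℕ} (d : Fin T → C × X × C) (t : Fin T) : Fin (t : ℕ) → C × X × C :=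
  fun s => d (emb t s)

/-- The unnormalized assignment likelihood
`f̂(d) = ∏_{t=1}^T a_t(x_t; c_t, h_{t−1}(d))`. -/
def assignLik {T : ℕ} (a : (t : Fin T) → X → C → (Fin (t : ℕ) → C × X × C) → ℝ≥0)
    (d : Fin T → C × X × C) : ℝ≥0 :=
  ∏ t, a t (d t).2.1 (d t).1 (hist d t)

/-- The indicator `∏_{t=1}^{T−1} 1[y_t = c_{t+1}]` enforcing the MDP structure
(the response at time `t` is the next state). -/
def chainInd {T : ℕ} (d : Fin T → C × X × C) : ℝ≥0 :=
  ∏ t : Fin T,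
    if h : (t : ℕ) + 1 < T then
      (if (d t).2.2 = (d ⟨(t : ℕ) + 1, h⟩).1 then 1 else 0)
    else 1

/-- The law of a stationary MDP trajectory:
`f(d) = μ(c₁) · ∏_{t<T} 1[y_t = c_{t+1}] · ∏_t a_t(x_t; c_t, h_{t−1}(d)) · P(y_t; c_t, x_t)`. -/
def mdpLaw {T : ℕ} (hT : 0 < T) (μ : C → ℝ≥0)
    (a : (t : Fin T) → X → C → (Fin (t : ℕ) → C × X × C) → ℝ≥0)
    (P : C → C → X → ℝ≥0)
    (d : Fin T → C × X × C) : ℝ≥0 :=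
  μ (d ⟨0, hT⟩).1 * chainInd d *
    ∏ t, a t (d t).2.1 (d t).1 (hist d t) * P (d t).2.2 (d t).1 (d t).2.1

/-- **(Proposition 2: stationary MDP with the restricted permutation set `Π₄`.)**
Under the null `H₀^{⊥⊥,g}`, for every permutation `π ∈ Π₄` and every resample
`d̃` agreeing with the `π`-permuted data in states, next states, and
`g`-evaluations of actions, one has `f(d̃) = K(d) · f̂(d̃)`. -/
theorem prop2_stationary_mdp
    [Countable C] [Countable X]
    (T : ℕ) (hT : 0 < T) (μ : C → ℝ≥0)
    (a : (t : Fin T) → X → C → (Fin (t : ℕ) → C × X × C) → ℝ≥0)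
    (P : C → C → X → ℝ≥0)
    (g : X → G)
    (hnull : ∀ (y c : C) (x x' : X), g x = g x' → P y c x = P y c x')
    (d : Fin T → C × X × C)
    (hd : ∀ (t : Fin T) (ht : (t : ℕ) + 1 < T),
      (d t).2.2 = (d ⟨(t : ℕ) + 1, ht⟩).1) :
    ∀ π : Equiv.Perm (Fin T),
      (∀ (t : Fin T) (ht : (t : ℕ) + 1 < T),
        (d (π t)).2.2 = (d (π ⟨(t : ℕ) + 1, ht⟩)).1) →
      (d (π ⟨0, hT⟩)).1 = (d ⟨0, hT⟩).1 →
      ∀ dtil : Fin T → C × X × C,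
        (∀ t, (dtil t).1 = (d (π t)).1 ∧ g (dtil t).2.1 = g (d (π t)).2.1 ∧
          (dtil t).2.2 = (d (π t)).2.2) →
        mdpLaw hT μ a P dtil =
          (μ (d ⟨0, hT⟩).1 * ∏ t, P (d t).2.2 (d t).1 (d t).2.1) *
            assignLik a dtil := by
  intro π hπ h0 dtil h
  have hc : chainInd dtil = 1 := by
    unfold chainInd
    refine Finset.prod_eq_one fun t _ => ?_
    split_ifs with h1 h2
    · rfl
    · exact absurd (by rw [(h t).2.2, (h _).1, hπ t h1]) h2
    · rfl
  have hP : ∏ t, P (dtil t).2.2 (dtil t).1 (dtil t).2.1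
      = ∏ t, P (d t).2.2 (d t).1 (d t).2.1 := by
    rw [← Equiv.prod_comp π (fun t => P (d t).2.2 (d t).1 (d t).2.1)]
    refine Finset.prod_congr rfl fun t _ => ?_
    rw [(h t).1, (h t).2.2]
    exact hnull _ _ _ _ (h t).2.1
  unfold mdpLaw assignLik
  rw [hc, Finset.prod_mul_distrib, hP, (h _).1, h0]
  ring
end
end

section
/- (Proposition 3, MDP case: proportionality under the stationarity null via Π₄ permutations.) Take 𝒴 = 𝒞 and suppose the law of the data has probability mass function f(d) = μ(c₁) · ∏_{t=1}^{T−1} 1[y_t = c_{t+1}] · ∏_{t=1}^T a_t(x_t; c_t, h_{t−1}(d)) · P(y_t; c_t, x_t), where μ : 𝒞 → ℝ≥0 is the initial-state distribution and P : 𝒞 × 𝒞 × 𝒳 → ℝ≥0 is a transition density that does not depend on t (the non-stationarity null hypothesis H₀^S for an MDP). Fix a trajectory d with y_t = c_{t+1} for all t ∈ {1, …, T−1}, and define Π₄ = {π a permutation of {1,…,T} : y_{π(t)} = c_{π(t+1)} for all t ∈ {1,…,T−1}, and c_{π(1)} = c₁}. Then for every π ∈ Π₄, the permuted trajectory d̃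 defined by (c̃_t, x̃_t, ỹ_t) = (c_{π(t)}, x_{π(t)}, y_{π(t)}) satisfies f(d̃) = K(d) · f̂(d̃), where K(d) = μ(c₁) · ∏_{t=1}^T P(y_t; c_t, x_t) depends only on d (not on π). -/
open scoped NNReal Classical BigOperators

noncomputable section

variable {C X : Type*}

/-- **(Proposition 3, MDP case: proportionality under the stationarity null via
`Π₄` permutations.)** For every `π ∈ Π₄`, the permuted trajectory `d̃ = d ∘ π`
satisfies `f(d̃) = K(d) · f̂(d̃)`, where `K(d) = μ(c₁) · ∏_t P(y_t; c_t, x_t)`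
does not depend on `π`. -/
theorem prop3_mdp_stationarity_null
    [Countable C] [Countable X]
    (T : ℕ) (hT : 0 < T) (μ : C → ℝ≥0)
    (a : (t : Fin T) → X → C → (Fin (t : ℕ) → C × X × C) → ℝ≥0)
    (P : C → C → X → ℝ≥0)
    (d : Fin T → C × X × C)
    (hd : ∀ (t : Fin T) (ht : (t : ℕ) + 1 < T),
      (d t).2.2 = (d ⟨(t : ℕ) + 1, ht⟩).1) :
    ∀ π : Equiv.Perm (Fin T),
      (∀ (t : Fin T) (ht : (t : ℕ) + 1 < T),
        (d (π t)).2.2 = (d (π ⟨(t : ℕ) + 1, ht⟩)).1) →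
      (d (π ⟨0, hT⟩)).1 = (d ⟨0, hT⟩).1 →
      mdpLaw hT μ a P (fun t => d (π t)) =
        (μ (d ⟨0, hT⟩).1 * ∏ t, P (d t).2.2 (d t).1 (d t).2.1) *
          assignLik a (fun t => d (π t)) := by
  intro π hπ h0
  have hc : chainInd (fun t => d (π t)) = 1 := by
    unfold chainInd
    apply Finset.prod_eq_one
    intro t _
    split_ifs with h h'
    · rfl
    · exact absurd (hπ t h) h'
    · rfl
  have hP : ∏ t, P (d (π t)).2.2 (d (π t)).1 (d (π t)).2.1
      = ∏ t, P (d t).2.2 (d t).1 (d t).2.1 :=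
    Equiv.prod_comp π (fun t => P (d t).2.2 (d t).1 (d t).2.1)
  unfold mdpLaw assignLik
  rw [hc, Finset.prod_mul_distrib, hP, h0]
  ring
end
end
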